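/- arXiv:1812.01361 — 7 statements merged into one kernel-verified Lean document; each statement's English description precedes it below -/
import Mathlib

section
/- Let v_1, v_2 : ℝ → ℝ be arbitrary functions and define S(u_1,u_2) = (v_2(u_2) − v_1(u_1))⁺ u_1 − (v_2(u_2) − v_1(u_1))⁻ u_2. Then for all real numbers u_1, u_2, S(u_1,u_2) · (H(−u_1) − H(−u_2)) ≤ 0, where H is the indicator function of [0,∞), a⁺ = max(a,0) and a⁻ = −min(a,0). -/
/-- Positive part `a⁺ = max(a,0)`. -/
noncomputable def pp (a : ℝ) : ℝ := max a 0

/-- Negative part `a⁻ = −min(a,0)`. -/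
noncomputable def np (a : ℝ) : ℝ := -(min a 0)

/-- The Heaviside function: indicator of `[0,∞)`. -/
noncomputable def Hv (a : ℝ) : ℝ := if 0 ≤ a then 1 else 0

/-- The lane-exchange source term
`S(u₁,u₂) = (v₂(u₂) − v₁(u₁))⁺ u₁ − (v₂(u₂) − v₁(u₁))⁻ u₂`. -/
noncomputable def S2 (v₁ v₂ : ℝ → ℝ) (a b : ℝ) : ℝ :=
  pp (v₂ b - v₁ a) * a - np (v₂ b - v₁ a) * b

/-- **Sign estimate for the source term.** For arbitrary velocity functions and all reals
`u₁, u₂`, one has `S(u₁,u₂) (H(−u₁) − H(−u₂)) ≤ 0`. -/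
theorem source_sign_nonnegativity (v₁ v₂ : ℝ → ℝ) (u₁ u₂ : ℝ) :
    S2 v₁ v₂ u₁ u₂ * (Hv (-u₁) - Hv (-u₂)) ≤ 0 := by
  have hp : 0 ≤ pp (v₂ u₂ - v₁ u₁) := le_max_right _ _
  have hn : 0 ≤ np (v₂ u₂ - v₁ u₁) := neg_nonneg.mpr (min_le_right _ _)
  unfold S2
  generalize pp (v₂ u₂ - v₁ u₁) = p at *
  generalize np (v₂ u₂ - v₁ u₁) = n at *
  unfold Hv
  split_ifs with h1 h2 h2
  · simp
  · have hu1 : 0 ≤ -u₁ := h1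
    have hu2 : 0 ≤ u₂ := by linarith
    nlinarith [mul_nonneg hp hu1, mul_nonneg hn hu2]
  · have hu1 : 0 ≤ u₁ := by linarith
    have hu2 : 0 ≤ -u₂ := h2
    nlinarith [mul_nonneg hp hu1, mul_nonneg hn hu2]
  · simp
end

section
/- Let v_1, v_2 : ℝ → ℝ be nonincreasing functions with v_1(1) = v_2(1) = 0, and define S(u_1,u_2) = (v_2(u_2) − v_1(u_1))⁺ u_1 − (v_2(u_2) − v_1(u_1))⁻ u_2. Then for all real numbers u_1 ≥ 0 and u_2 ≥ 0, S(u_1,u_2) · (H(u_2 − 1) − H(u_1 − 1)) ≤ 0, where H is the indicator function of [0,∞), a⁺ = max(a,0) and a⁻ = −min(a,0). -/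
/-- **Sign estimate for the source term (upper bound `1`).** For nonincreasing velocities
with `v₁(1) = v₂(1) = 0` and all nonnegative reals `u₁, u₂`, one has
`S(u₁,u₂) (H(u₂ − 1) − H(u₁ − 1)) ≤ 0`. -/
theorem source_sign_upper_bound
    (v₁ v₂ : ℝ → ℝ) (hmono₁ : Antitone v₁) (hmono₂ : Antitone v₂)
    (hv₁ : v₁ 1 = 0) (hv₂ : v₂ 1 = 0)
    (u₁ u₂ : ℝ) (hu₁ : 0 ≤ u₁) (hu₂ : 0 ≤ u₂) :
    S2 v₁ v₂ u₁ u₂ * (Hv (u₂ - 1) - Hv (u₁ - 1)) ≤ 0 := by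
  unfold S2 pp np Hv
  by_cases h2 : 0 ≤ u₂ - 1 <;> by_cases h1 : 0 ≤ u₁ - 1
  · simp [h1, h2]
  · have a := hmono₂ (show (1 : ℝ) ≤ u₂ by linarith)
    have b := hmono₁ (show u₁ ≤ (1 : ℝ) by linarith)
    have d : v₂ u₂ - v₁ u₁ ≤ 0 := by linarith
    rw [if_pos h2, if_neg h1, max_eq_right d, min_eq_left d]
    nlinarith [mul_nonneg (neg_nonneg.2 d) hu₂]
  · have a := hmono₂ (show u₂ ≤ (1 : ℝ) by linarith)
    have b := hmono₁ (show (1 : ℝ) ≤ u₁ by linarith)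
    have d : 0 ≤ v₂ u₂ - v₁ u₁ := by linarith
    rw [if_neg h2, if_pos h1, max_eq_left d, min_eq_right d]
    nlinarith [mul_nonneg d hu₁]
  · simp [h1, h2]
end

section
/- Let v_1, v_2 : ℝ → ℝ be nonincreasing functions and define S(a,b) = (v_2(b) − v_1(a))⁺ a − (v_2(b) − v_1(a))⁻ b. Then for all nonnegative reals a, a', b, b': (i) if a ≤ a' then S(a,b) ≤ S(a',b) (S is nondecreasing in its first argument on [0,∞)), and (ii) if b ≤ b' then S(a,b') ≤ S(a,b) (S is nonincreasing in its second argument on [0,∞)). -/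
/-- **Monotonicity of the source term.** For nonincreasing velocities, the lane-exchange
term `S` is nondecreasing in its first argument and nonincreasing in its second argument
on `[0,∞)`. -/
theorem source_monotone
    (v₁ v₂ : ℝ → ℝ) (hmono₁ : Antitone v₁) (hmono₂ : Antitone v₂) :
    (∀ a a' b : ℝ, 0 ≤ a → 0 ≤ a' → 0 ≤ b → a ≤ a' →
      S2 v₁ v₂ a b ≤ S2 v₁ v₂ a' b) ∧
    (∀ a b b' : ℝ, 0 ≤ a → 0 ≤ b → 0 ≤ b' → b ≤ b' →
      S2 v₁ v₂ a b' ≤ S2 v₁ v₂ a b) := by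
  have hp0 : ∀ x, 0 ≤ pp x := fun x => le_max_right x 0
  have hn0 : ∀ x, 0 ≤ np x := fun x => neg_nonneg.mpr (min_le_right x 0)
  have hp : ∀ x y, x ≤ y → pp x ≤ pp y := fun x y h => max_le_max_right 0 h
  have hn : ∀ x y, x ≤ y → np y ≤ np x := fun x y h =>
    neg_le_neg (min_le_min_right 0 h)
  refine ⟨fun a a' b ha ha' hb h => ?_, fun a b b' ha hb hb' h => ?_⟩
  · have hx : v₂ b - v₁ a ≤ v₂ b - v₁ a' := sub_le_sub_left (hmono₁ h) _
    exact sub_le_sub (mul_le_mul (hp _ _ hx) h ha (hp0 _))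
      (mul_le_mul_of_nonneg_right (hn _ _ hx) hb)
  · have hx : v₂ b' - v₁ a ≤ v₂ b - v₁ a := sub_le_sub_right (hmono₂ h) _
    exact sub_le_sub (mul_le_mul_of_nonneg_right (hp _ _ hx) ha)
      (mul_le_mul (hn _ _ hx) h hb (hn0 _))
end

section
/- Let v_1, v_2, v_3 : ℝ → ℝ be nonincreasing functions that are Lipschitz continuous with constant L and satisfy 0 ≤ v_j ≤ M on [0,1]. Define S_1(a,b) = (v_2(b) − v_1(a))⁺ a − (v_2(b) − v_1(a))⁻ b and S_2(b,c) = (v_3(c) − v_2(b))⁺ b − (v_3(c) − v_2(b))⁻ c. Then there is a constant C, depending only on L and M (e.g. C = max(M + L, 2L)), such that for all u_1, u_2, u_3, ū_1, ū_2, ū_3 ∈ [0,1] with u_2 > ū_2: S_1(u_1,u_2) − S_1(ū_1,ū_2) − (S_2(u_2,u_3) − S_2(ū_2,ū_3)) ≤ C · ((u_1 − ū_1)⁺ + (u_3 − ū_3)⁺). -/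
open Set

lemma src_aux_pp (x y : ℝ) (h : x ≤ y) : pp x ≤ pp y := max_le_max_right 0 h

lemma src_aux_np (x y : ℝ) (h : x ≤ y) : np y ≤ np x := neg_le_neg (min_le_min_right 0 h)

lemma src_aux_pp0 (x : ℝ) : 0 ≤ pp x := le_max_right _ _

lemma src_aux_np0 (x : ℝ) : 0 ≤ np x := by
  have := min_le_right x 0
  unfold np; linarith

lemma src_aux_sub (x : ℝ) : pp x - np x = x := by
  have := max_add_min x 0
  unfold pp np; linarith

/-- Monotonicity of the source. -/
lemma src_mono (v w : ℝ → ℝ) (hv : Antitone v) (hw : Antitone w) (a a' b b' : ℝ)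
    (ha : 0 ≤ a) (haa : a ≤ a') (hb : 0 ≤ b') (hbb : b' ≤ b) :
    S2 v w a b ≤ S2 v w a' b' := by
  have hx : w b - v a ≤ w b' - v a' := by linarith [hv haa, hw hbb]
  unfold S2
  have h1 := mul_le_mul (src_aux_pp _ _ hx) haa ha (src_aux_pp0 (w b' - v a'))
  have h2 := mul_le_mul (src_aux_np _ _ hx) hbb hb (src_aux_np0 (w b - v a))
  linarith

/-- One-sided Lipschitz bound of the source. -/
lemma src_lip (L : NNReal) (M : ℝ) (v w : ℝ → ℝ) (hv : Antitone v) (hw : Antitone w)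
    (lv : LipschitzWith L v) (lw : LipschitzWith L w)
    (bv : ∀ x ∈ Icc (0:ℝ) 1, v x ∈ Icc 0 M) (bw : ∀ x ∈ Icc (0:ℝ) 1, w x ∈ Icc 0 M)
    (a a' b b' : ℝ) (ha : a ∈ Icc (0:ℝ) 1) (ha' : a' ∈ Icc (0:ℝ) 1)
    (hb : b ∈ Icc (0:ℝ) 1) (hb' : b' ∈ Icc (0:ℝ) 1) (haa : a ≤ a') (hbb : b' ≤ b) :
    S2 v w a' b' - S2 v w a b ≤ (M + L) * ((a' - a) + (b - b')) := by
  have hx : w b - v a ≤ w b' - v a' := by linarith [hv haa, hw hbb]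
  have l1 : v a - v a' ≤ L * (a' - a) := by
    have h := lv.dist_le_mul a a'
    rw [Real.dist_eq, Real.dist_eq, abs_sub_comm a a', abs_of_nonneg (sub_nonneg.2 haa)] at h
    exact (le_abs_self _).trans h
  have l2 : w b' - w b ≤ L * (b - b') := by
    have h := lw.dist_le_mul b' b
    rw [Real.dist_eq, Real.dist_eq, abs_sub_comm b' b, abs_of_nonneg (sub_nonneg.2 hbb)] at h
    exact (le_abs_self _).trans h
  have p1 := src_aux_pp _ _ hx
  have p2 := src_aux_np _ _ hx
  have s1 := src_aux_sub (w b - v a)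
  have s2 := src_aux_sub (w b' - v a')
  have m1 : pp (w b' - v a') ≤ M :=
    max_le (by linarith [(bw b' hb').2, (bv a' ha').1]) ((bv a ha).1.trans (bv a ha).2)
  have m2 : np (w b - v a) ≤ M := by
    have : -M ≤ min (w b - v a) 0 :=
      le_min (by linarith [(bw b hb).1, (bv a ha).2])
        (by linarith [(bv a ha).1.trans (bv a ha).2])
    unfold np; linarith
  unfold S2
  generalize pp (w b' - v a') = P' at *
  generalize pp (w b - v a) = P at *
  generalize np (w b' - v a') = N' at *
  generalize np (w b - v a) = N at *
  have q1 := mul_le_mul_of_nonneg_right m1 (sub_nonneg.2 haa)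
  have q2 := mul_le_mul_of_nonneg_right m2 (sub_nonneg.2 hbb)
  have q3 := mul_le_mul_of_nonneg_left ha.2 (sub_nonneg.2 p1)
  have q4 := mul_le_mul_of_nonneg_left hb'.2 (sub_nonneg.2 p2)
  linarith

/-- **One-sided estimate on differences of source contributions.** There is a constant `C`,
depending only on the Lipschitz constant `L` and the bound `M` (e.g. `C = max(M+L, 2L)`),
such that for any three nonincreasing `L`-Lipschitz velocities with values in `[0,M]` on
`[0,1]`, and any `u₁,u₂,u₃,ū₁,ū₂,ū₃ ∈ [0,1]` with `u₂ > ū₂`,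
`S₁(u₁,u₂) − S₁(ū₁,ū₂) − (S₂(u₂,u₃) − S₂(ū₂,ū₃)) ≤ C ((u₁−ū₁)⁺ + (u₃−ū₃)⁺)`. -/
theorem source_difference_estimate (L : NNReal) (M : ℝ) (hM : 0 ≤ M) :
    ∃ C : ℝ, ∀ v₁ v₂ v₃ : ℝ → ℝ,
      Antitone v₁ → Antitone v₂ → Antitone v₃ →
      LipschitzWith L v₁ → LipschitzWith L v₂ → LipschitzWith L v₃ →
      (∀ x ∈ Icc (0:ℝ) 1, v₁ x ∈ Icc 0 M) →
      (∀ x ∈ Icc (0:ℝ) 1, v₂ x ∈ Icc 0 M) →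
      (∀ x ∈ Icc (0:ℝ) 1, v₃ x ∈ Icc 0 M) →
      ∀ u₁ u₂ u₃ ub₁ ub₂ ub₃ : ℝ,
        u₁ ∈ Icc (0:ℝ) 1 → u₂ ∈ Icc (0:ℝ) 1 → u₃ ∈ Icc (0:ℝ) 1 →
        ub₁ ∈ Icc (0:ℝ) 1 → ub₂ ∈ Icc (0:ℝ) 1 → ub₃ ∈ Icc (0:ℝ) 1 →
        ub₂ < u₂ →
        S2 v₁ v₂ u₁ u₂ - S2 v₁ v₂ ub₁ ub₂ - (S2 v₂ v₃ u₂ u₃ - S2 v₂ v₃ ub₂ ub₃)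
          ≤ C * (pp (u₁ - ub₁) + pp (u₃ - ub₃)) := by
  refine ⟨M + L, ?_⟩
  intro v₁ v₂ v₃ a₁ a₂ a₃ l₁ l₂ l₃ b₁ b₂ b₃ u₁ u₂ u₃ ub₁ ub₂ ub₃ h₁ h₂ h₃ k₁ k₂ k₃ hlt
  have hC : 0 ≤ M + (L : ℝ) := add_nonneg hM L.2
  have e1 : S2 v₁ v₂ u₁ u₂ - S2 v₁ v₂ ub₁ ub₂ ≤ (M + L) * pp (u₁ - ub₁) := by
    have m := src_mono v₁ v₂ a₁ a₂ ub₁ ub₁ u₂ ub₂ k₁.1 le_rfl k₂.1 hlt.le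
    rcases le_total u₁ ub₁ with h | h
    · have m' := src_mono v₁ v₂ a₁ a₂ u₁ ub₁ u₂ u₂ h₁.1 h h₂.1 le_rfl
      have := mul_nonneg hC (src_aux_pp0 (u₁ - ub₁))
      linarith
    · have m' := src_lip L M v₁ v₂ a₁ a₂ l₁ l₂ b₁ b₂ ub₁ u₁ u₂ u₂ k₁ h₁ h₂ h₂ h le_rfl
      have e : pp (u₁ - ub₁) = u₁ - ub₁ := max_eq_left (sub_nonneg.2 h)
      rw [e]; linarith
  have e2 : S2 v₂ v₃ ub₂ ub₃ - S2 v₂ v₃ u₂ u₃ ≤ (M + L) * pp (u₃ - ub₃) := by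
    have m := src_mono v₂ v₃ a₂ a₃ ub₂ u₂ ub₃ ub₃ k₂.1 hlt.le k₃.1 le_rfl
    rcases le_total u₃ ub₃ with h | h
    · have m' := src_mono v₂ v₃ a₂ a₃ u₂ u₂ ub₃ u₃ h₂.1 le_rfl h₃.1 h
      have := mul_nonneg hC (src_aux_pp0 (u₃ - ub₃))
      linarith
    · have m' := src_lip L M v₂ v₃ a₂ a₃ l₂ l₃ b₂ b₃ u₂ u₂ u₃ ub₃ h₂ h₂ h₃ k₃ le_rfl h
      have e : pp (u₃ - ub₃) = u₃ - ub₃ := max_eq_left (sub_nonneg.2 h)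
      rw [e]; linarith
  rw [mul_add]
  linarith
end

section
/- Let N ≥ 1, Δy > 0, and let (u_i)_{i=0}^{N+1}, (k_i)_{i=0}^{N+1}, (g_i)_{i=0}^{N+1} be real sequences. Set V_i = −k_i g_i and S_i = (V_{i+1} − V_i)⁺ u_i − (V_{i+1} − V_i)⁻ u_{i+1}, and define the divided differences D⁺a_i = (a_{i+1} − a_i)/Δy and D⁻a_i = (a_i − a_{i−1})/Δy. Then for each i = 1, …, N: (S_{i−1} − S_i)/Δy² = D⁺(u_i · D⁻(k_i g_i)) + Δy · D⁻((D⁺u_i) · (D⁺(k_i g_i))⁻), where on the right-hand side D⁺ and D⁻ act on the sequences i ↦ u_i D⁻(k_i g_i) and i ↦ (D⁺u_i)(D⁺(k_i g_i))⁻ respectively. -/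
/-- Forward divided difference `D⁺aᵢ = (aᵢ₊₁ − aᵢ)/Δy`. -/
noncomputable def Dp (dy : ℝ) (a : ℕ → ℝ) (i : ℕ) : ℝ := (a (i+1) - a i) / dy

/-- Backward divided difference `D⁻aᵢ = (aᵢ − aᵢ₋₁)/Δy`. -/
noncomputable def Dm (dy : ℝ) (a : ℕ → ℝ) (i : ℕ) : ℝ := (a i - a (i-1)) / dy

/-- The lane-exchange term `Sᵢ = (Vᵢ₊₁ − Vᵢ)⁺ uᵢ − (Vᵢ₊₁ − Vᵢ)⁻ uᵢ₊₁`. -/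
noncomputable def Sseq (u V : ℕ → ℝ) (i : ℕ) : ℝ :=
  pp (V (i+1) - V i) * u i - np (V (i+1) - V i) * u (i+1)

theorem Sseq_neg (u w : ℕ → ℝ) (j : ℕ) :
    Sseq u (fun l => -(w l)) j
      = -(np (w (j+1) - w j) * (u (j+1) - u j)) - (w (j+1) - w j) * u (j+1) := by
  simp only [Sseq, pp, np]
  rcases le_total (w (j+1)) (w j) with h | h
  · rw [max_eq_left (by linarith), min_eq_right (by linarith), min_eq_left (by linarith)]
    ring
  · rw [max_eq_right (by linarith), min_eq_left (by linarith), min_eq_right (by linarith)]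
    ring

theorem np_div (a dy : ℝ) (h : 0 < dy) : np (a / dy) = np a / dy := by
  simp only [np]
  rcases le_total a 0 with ha | ha
  · rw [min_eq_left ha, min_eq_left (div_nonpos_of_nonpos_of_nonneg ha h.le)]
    ring
  · rw [min_eq_right ha, min_eq_right (div_nonneg ha h.le)]
    simp

/-- **Discrete conservative form of the source term.** With `Vᵢ = −kᵢgᵢ`, for
`i = 1, …, N`:
`(Sᵢ₋₁ − Sᵢ)/Δy² = D⁺(uᵢ D⁻(kᵢgᵢ)) + Δy D⁻((D⁺uᵢ)(D⁺(kᵢgᵢ))⁻)`. -/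
theorem discrete_source_identity
    (N : ℕ) (hN : 1 ≤ N) (dy : ℝ) (hdy : 0 < dy)
    (u k g : ℕ → ℝ) (i : ℕ) (hi1 : 1 ≤ i) (hiN : i ≤ N) :
    (Sseq u (fun j => -(k j * g j)) (i-1) - Sseq u (fun j => -(k j * g j)) i) / dy^2
      = Dp dy (fun j => u j * Dm dy (fun l => k l * g l) j) i
        + dy * Dm dy (fun j => Dp dy u j * np (Dp dy (fun l => k l * g l) j)) i := by
  obtain ⟨m, rfl⟩ : ∃ m, i = m + 1 := ⟨i - 1, by omega⟩
  rw [Sseq_neg u (fun l => k l * g l), Sseq_neg u (fun l => k l * g l)]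
  simp only [Dp, Dm, np_div _ _ hdy, Nat.add_sub_cancel]
  field_simp
  ring
end

section
/- Let N ≥ 1, Δy > 0, and let (u_i)_{i=0}^{N+1}, (k_i)_{i=0}^{N+1}, (g_i)_{i=0}^{N+1} be real sequences. Set V_i = −k_i g_i and S_i = (V_{i+1} − V_i)⁺ u_i − (V_{i+1} − V_i)⁻ u_{i+1}, and define the divided differences D⁺a_i = (a_{i+1} − a_i)/Δy and D⁻a_i = (a_i − a_{i−1})/Δy. Then for each i = 1, …, N: (S_{i−1} − S_i)/Δy² = D⁻(u_i · D⁺(k_i g_i)) + Δy · D⁻((D⁺u_i) · (D⁺(k_i g_i))⁺), where on the right-hand side D⁻ acts on the sequences i ↦ u_i D⁺(k_i g_i) and i ↦ (D⁺u_i)(D⁺(k_i g_i))⁺ respectively. -/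
theorem Sseq_rewrite (dy : ℝ) (hdy : 0 < dy) (u w : ℕ → ℝ) (j : ℕ) :
    Sseq u (fun l => -(w l)) j
      = -(dy * (u j * Dp dy w j + dy * (Dp dy u j * pp (Dp dy w j)))) := by
  have hne : dy ≠ 0 := hdy.ne'
  unfold Sseq Dp pp np
  rcases le_total 0 (w (j+1) - w j) with h | h
  · rw [max_eq_right (by linarith), min_eq_left (by linarith),
      max_eq_left (div_nonneg h hdy.le)]
    field_simp
    ring
  · rw [max_eq_left (by linarith), min_eq_right (by linarith),
      max_eq_right (div_nonpos_of_nonpos_of_nonneg h hdy.le)]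
    field_simp
    ring

/-- **Alternative discrete conservative form of the source term.** With `Vᵢ = −kᵢgᵢ`, for
`i = 1, …, N`:
`(Sᵢ₋₁ − Sᵢ)/Δy² = D⁻(uᵢ D⁺(kᵢgᵢ)) + Δy D⁻((D⁺uᵢ)(D⁺(kᵢgᵢ))⁺)`. -/
theorem discrete_source_identity_alt
    (N : ℕ) (hN : 1 ≤ N) (dy : ℝ) (hdy : 0 < dy)
    (u k g : ℕ → ℝ) (i : ℕ) (hi1 : 1 ≤ i) (hiN : i ≤ N) :
    (Sseq u (fun j => -(k j * g j)) (i-1) - Sseq u (fun j => -(k j * g j)) i) / dy^2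
      = Dm dy (fun j => u j * Dp dy (fun l => k l * g l) j) i
        + dy * Dm dy (fun j => Dp dy u j * pp (Dp dy (fun l => k l * g l) j)) i := by
  have hne : dy ≠ 0 := hdy.ne'
  rw [Sseq_rewrite dy hdy u (fun l => k l * g l) (i-1),
    Sseq_rewrite dy hdy u (fun l => k l * g l) i]
  unfold Dm
  field_simp
  ring
end

section
/- Let N ≥ 1, Δy = 1/N, and let u_0, u_1, …, u_N be real numbers in [0,1] with u_0 = u_1 (so that D⁻u_1 = 0). Set u_{i−1/2} = (u_i + u_{i−1})/2 and D⁻u_i = (u_i − u_{i−1})/Δy, and also D⁺u_i = (u_{i+1} − u_i)/Δy for i ≤ N−1. Then for all 1 ≤ m ≤ ℓ ≤ N: (1/2)|u_ℓ² − u_m²| ≤ √(Δy(ℓ − m)) · ( (Δy/2) Σ_{i=1}^{N} u_i ((D⁻u_i)² + (D⁺u_i)²) )^{1/2}, where in the last sum D⁺u_N is interpreted as 0. -/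
open Set

/-- **Discrete Cauchy–Schwarz estimate in the lane variable.** For lane densities
`u₀, u₁, …, u_N ∈ [0,1]` with `u₀ = u₁`, `Δy = 1/N`, and `1 ≤ m ≤ ℓ ≤ N`,
`(1/2)|u_ℓ² − u_m²| ≤ √(Δy(ℓ−m)) ((Δy/2) Σ_{i=1}^N uᵢ((D⁻uᵢ)² + (D⁺uᵢ)²))^{1/2}`,
where `D⁻uᵢ = (uᵢ − uᵢ₋₁)/Δy`, `D⁺uᵢ = (uᵢ₊₁ − uᵢ)/Δy`, and `D⁺u_N` is interpreted
as `0`. -/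
theorem discrete_lane_holder_estimate
    (N : ℕ) (hN : 1 ≤ N) (u : ℕ → ℝ)
    (hu : ∀ i ≤ N, u i ∈ Icc (0:ℝ) 1) (h01 : u 0 = u 1)
    (m l : ℕ) (hm : 1 ≤ m) (hml : m ≤ l) (hl : l ≤ N) :
    (1/2) * |u l ^ 2 - u m ^ 2|
      ≤ Real.sqrt ((1/(N:ℝ)) * ((l:ℝ) - (m:ℝ))) *
          Real.sqrt (((1/(N:ℝ))/2) * ∑ i ∈ Finset.Icc 1 N,
            u i * (((N:ℝ) * (u i - u (i-1)))^2
              + (if i < N then (N:ℝ) * (u (i+1) - u i) else 0)^2)) := by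
  have hN0 : (0:ℝ) < N := by exact_mod_cast hN
  have hlm : (0:ℝ) ≤ (l:ℝ) - m := sub_nonneg.2 (by exact_mod_cast hml)
  rw [← Real.sqrt_mul (by positivity)]
  apply Real.le_sqrt_of_sq_le
  rw [mul_pow, sq_abs]
  have tel : ∑ i ∈ Finset.Ico m l, (u (i+1) + u i) * (u (i+1) - u i) = u l ^ 2 - u m ^ 2 := by
    rw [← Finset.sum_Ico_sub (fun i => u i ^ 2) hml]
    exact Finset.sum_congr rfl fun i _ => by ring
  have cs : (u l ^ 2 - u m ^ 2)^2 ≤ ((l:ℝ) - m) *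
      ∑ i ∈ Finset.Ico m l, ((u (i+1) + u i) * (u (i+1) - u i))^2 := by
    rw [← tel]
    have h := sq_sum_le_card_mul_sum_sq (s := Finset.Ico m l)
      (f := fun i => (u (i+1) + u i) * (u (i+1) - u i))
    rw [Nat.card_Ico, Nat.cast_sub hml] at h
    exact h
  have b1 : ∑ i ∈ Finset.Ico m l, ((u (i+1) + u i) * (u (i+1) - u i))^2
      ≤ 2 * (∑ i ∈ Finset.Ico m l, u (i+1) * (u (i+1) - u i)^2
        + ∑ i ∈ Finset.Ico m l, u i * (u (i+1) - u i)^2) := by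
    rw [← Finset.sum_add_distrib, Finset.mul_sum]
    refine Finset.sum_le_sum fun i hi => ?_
    rw [Finset.mem_Ico] at hi
    obtain ⟨h1, h2⟩ := hu i (by omega)
    obtain ⟨h3, h4⟩ := hu (i+1) (by omega)
    have : (u (i+1) + u i)^2 ≤ 2 * (u (i+1) + u i) := by nlinarith
    have := mul_le_mul_of_nonneg_right this (sq_nonneg (u (i+1) - u i))
    nlinarith
  have b2 : (N:ℝ)^2 * ∑ i ∈ Finset.Ico m l, u (i+1) * (u (i+1) - u i)^2
      ≤ ∑ i ∈ Finset.Icc 1 N, u i * ((N:ℝ) * (u i - u (i-1)))^2 := by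
    have e : ∑ i ∈ Finset.Ico m l, u (i+1) * (u (i+1) - u i)^2
        = ∑ i ∈ Finset.Ico (m+1) (l+1), u i * (u i - u (i-1))^2 := by
      rw [← Finset.sum_Ico_add' (fun i => u i * (u i - u (i-1))^2)]
      simp
    rw [e, Finset.mul_sum]
    calc _ = ∑ i ∈ Finset.Ico (m+1) (l+1), u i * ((N:ℝ) * (u i - u (i-1)))^2 :=
          Finset.sum_congr rfl fun i _ => by ring
      _ ≤ _ := by
        apply Finset.sum_le_sum_of_subset_of_nonneg
        · intro i hi
          simp only [Finset.mem_Ico, Finset.mem_Icc] at *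
          omega
        · intro i hi _
          exact mul_nonneg (hu i (Finset.mem_Icc.1 hi).2).1 (sq_nonneg _)
  have b3 : (N:ℝ)^2 * ∑ i ∈ Finset.Ico m l, u i * (u (i+1) - u i)^2
      ≤ ∑ i ∈ Finset.Icc 1 N, u i * (if i < N then (N:ℝ) * (u (i+1) - u i) else 0)^2 := by
    rw [Finset.mul_sum]
    calc _ = ∑ i ∈ Finset.Ico m l,
            u i * (if i < N then (N:ℝ) * (u (i+1) - u i) else 0)^2 :=
          Finset.sum_congr rfl fun i hi => by
            rw [if_pos (by have := (Finset.mem_Ico.1 hi).2; omega)]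
            ring
      _ ≤ _ := by
        apply Finset.sum_le_sum_of_subset_of_nonneg
        · intro i hi
          simp only [Finset.mem_Ico, Finset.mem_Icc] at *
          omega
        · intro i hi _
          exact mul_nonneg (hu i (Finset.mem_Icc.1 hi).2).1 (sq_nonneg _)
  simp only [mul_add, Finset.sum_add_distrib] at b1 ⊢
  set A := ∑ i ∈ Finset.Ico m l, u (i+1) * (u (i+1) - u i)^2
  set B := ∑ i ∈ Finset.Ico m l, u i * (u (i+1) - u i)^2
  have key := mul_le_mul_of_nonneg_left (add_le_add b2 b3)
    (show (0:ℝ) ≤ 1/(N:ℝ) * ((l:ℝ) - m) * (1/(N:ℝ)/2) by positivity)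
  have e2 : 1/(N:ℝ) * ((l:ℝ) - m) * (1/(N:ℝ)/2) * ((N:ℝ)^2 * A + (N:ℝ)^2 * B)
      = ((l:ℝ) - m) * (A + B) / 2 := by field_simp
  rw [e2] at key
  have := mul_le_mul_of_nonneg_left b1 hlm
  linarith
end
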